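/- Let k ≥ 2 and l ≥ 0 be integers, let t = l + k − 1, and let both C*_{2k+1,l} and C*_{3,t} be defined and have order n (so n ≥ 2k + 1 + l). Then γ(C*_{3,t}) ≤ γ(C*_{2k+1,l}). -/

import Mathlib

open scoped Classical

/-- `D` is a dominating set of `G`: every vertex not in `D` is adjacent to a vertex of `D`. -/
def IsDominatingSet {V : Type*} [Fintype V] (G : SimpleGraph V) (D : Finset V) : Prop :=
  ∀ v, v ∉ D → ∃ u ∈ D, G.Adj u v

/-- The domination number of `G`: minimum cardinality of a dominating set. -/
noncomputable def dominationNumber {V : Type*} [Fintype V] (G : SimpleGraph V) : ℕ :=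
  sInf {k | ∃ D : Finset V, IsDominatingSet G D ∧ D.card = k}

/-- Edge relation for the graph `C*_{s,l}` on vertex indices `0, …, n-1`:
vertices `0, …, s-1` form a cycle `C_s` (with `0` playing the role of `v_1`);
vertices `0, s, s+1, …, s+l-1` form a path of length `l` hanging at `0`;
and all remaining vertices `s+l, …, n-1` are pendant vertices attached to the
other end of the path (to `0` itself when `l = 0`). -/
def cstarRel (s l : ℕ) (a b : ℕ) : Prop :=
  (b = a + 1 ∧ a + 1 < s) ∨
  (a = 0 ∧ b = s - 1) ∨
  (1 ≤ l ∧ a = 0 ∧ b = s) ∨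
  (b = a + 1 ∧ s ≤ a ∧ a + 1 < s + l) ∨
  (a = (if l = 0 then 0 else s + l - 1) ∧ s + l ≤ b)

/-- The graph `C*_{s,l}` of order `n`: a cycle `C_s` with a path of length `l`
attached, and `n - s - l` pendant edges attached at the far end of the path. -/
def Cstar (n s l : ℕ) : SimpleGraph (Fin n) :=
  SimpleGraph.fromRel (fun i j => cstarRel s l i.val j.val)

/-!
Call the vertices of `C*_{s,l}` on the cycle and the path its core; there are `s + l` of them.
A vertex other than the attachment vertex `0` dominates at most three core vertices, and `0`
dominates at most four, so `s + l ≤ 3 γ(C*_{s,l}) + 1`. In `C*_{3,t}` the vertex `0` together with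
every third vertex of the path, counted backwards from its far end, is dominating, so
`γ(C*_{3,t}) ≤ ⌈t / 3⌉ + 1`. The two bounds compare as soon as `t + 4 ≤ s + l`.
-/

section Domination

variable {V : Type*} [Fintype V] {G : SimpleGraph V}

theorem IsDominatingSet.dominationNumber_le_card {D : Finset V} (hD : IsDominatingSet G D) :
    dominationNumber G ≤ D.card :=
  Nat.sInf_le ⟨D, hD, rfl⟩

theorem isDominatingSet_univ (G : SimpleGraph V) : IsDominatingSet G Finset.univ :=
  fun v hv => absurd (Finset.mem_univ v) hv

theorem exists_isDominatingSet_card_eq_dominationNumber (G : SimpleGraph V) :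
    ∃ D : Finset V, IsDominatingSet G D ∧ D.card = dominationNumber G :=
  Nat.sInf_mem (s := {k | ∃ D : Finset V, IsDominatingSet G D ∧ D.card = k})
    ⟨_, Finset.univ, isDominatingSet_univ G, rfl⟩

/-- The closed neighbourhood `N[v]`, i.e. the set of vertices dominated by `v`. -/
def closedNeighborFinset [DecidableEq V] (G : SimpleGraph V) (v : V) [Fintype (G.neighborSet v)] :
    Finset V :=
  insert v (G.neighborFinset v)

variable [DecidableEq V] [DecidableRel G.Adj]

theorem mem_closedNeighborFinset {v w : V} :
    w ∈ closedNeighborFinset G v ↔ w = v ∨ G.Adj v w := by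
  rw [closedNeighborFinset, Finset.mem_insert, SimpleGraph.mem_neighborFinset]

theorem IsDominatingSet.card_le_sum_card_inter {D : Finset V} (hD : IsDominatingSet G D)
    (S : Finset V) : S.card ≤ ∑ d ∈ D, (S ∩ closedNeighborFinset G d).card := by
  have hcover : S ⊆ D.biUnion fun d => S ∩ closedNeighborFinset G d := by
    intro w hw
    simp only [Finset.mem_biUnion, Finset.mem_inter, mem_closedNeighborFinset]
    by_cases hwD : w ∈ D
    · exact ⟨w, hwD, hw, Or.inl rfl⟩
    · obtain ⟨d, hd, hdw⟩ := hD w hwD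
      exact ⟨d, hd, hw, Or.inr hdw⟩
  exact (Finset.card_le_card hcover).trans Finset.card_biUnion_le

theorem card_le_mul_dominationNumber_add {S : Finset V} {m e : ℕ} (v₀ : V)
    (h₀ : (S ∩ closedNeighborFinset G v₀).card ≤ m + e)
    (h : ∀ v, v ≠ v₀ → (S ∩ closedNeighborFinset G v).card ≤ m) :
    S.card ≤ m * dominationNumber G + e := by
  obtain ⟨D, hD, hcard⟩ := exists_isDominatingSet_card_eq_dominationNumber G
  calc S.card
      ≤ ∑ d ∈ D, (S ∩ closedNeighborFinset G d).card := hD.card_le_sum_card_inter S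
    _ ≤ ∑ d ∈ D, (m + if d = v₀ then e else 0) := by
        refine Finset.sum_le_sum fun d _ => ?_
        split_ifs with hd
        · exact hd ▸ h₀
        · exact h d hd
    _ = m * dominationNumber G + if v₀ ∈ D then e else 0 := by
        rw [Finset.sum_add_distrib, Finset.sum_const, Finset.sum_ite_eq', hcard, smul_eq_mul,
          mul_comm]
    _ ≤ m * dominationNumber G + e := by
        gcongr
        split_ifs <;> simp

end Domination

section Cstar

variable {n s l a b : ℕ}

theorem cstarRel_pendant (hb : s + l ≤ b) : cstarRel s l (if l = 0 then 0 else s + l - 1) b :=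
  Or.inr (Or.inr (Or.inr (Or.inr ⟨rfl, hb⟩)))

theorem cstarRel_path_succ (hs : s ≤ a) (ha : a + 1 < s + l) : cstarRel s l a (a + 1) :=
  Or.inr (Or.inr (Or.inr (Or.inl ⟨rfl, hs, ha⟩)))

theorem Cstar_adj {u v : Fin n} :
    (Cstar n s l).Adj u v ↔ u ≠ v ∧ (cstarRel s l u v ∨ cstarRel s l v u) :=
  SimpleGraph.fromRel_adj _ _ _

theorem eq_of_cstarRel_of_eq_zero (ha : a = 0) (hb : b < s + l)
    (h : cstarRel s l a b ∨ cstarRel s l b a) : b = 1 ∨ b = s - 1 ∨ b = s := by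
  unfold cstarRel at h
  split_ifs at h <;> omega

theorem eq_of_cstarRel_of_ne_zero (ha₀ : a ≠ 0) (ha : a < s + l) (hb : b < s + l)
    (h : cstarRel s l a b ∨ cstarRel s l b a) :
    b = (if a = s then 0 else a - 1) ∨ b = if a + 1 = s then 0 else a + 1 := by
  unfold cstarRel at h
  split_ifs at h ⊢ <;> omega

theorem eq_of_cstarRel_of_le (ha : s + l ≤ a) (hb : b < s + l)
    (h : cstarRel s l a b ∨ cstarRel s l b a) : b = if l = 0 then 0 else s + l - 1 := by
  unfold cstarRel at h
  split_ifs at h ⊢ <;> omega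

/-- The vertices of `C*_{s,l}` on its cycle and its path, i.e. all but the pendant ones at the far
end of the path. -/
def cstarCore (n s l : ℕ) : Finset (Fin n) :=
  Finset.univ.filter fun v => v.val < s + l

theorem card_cstarCore (hn : s + l ≤ n) : (cstarCore n s l).card = s + l := by
  rw [cstarCore, Fin.card_filter_val_lt, min_eq_right hn]

theorem card_cstarCore_inter_le {v : Fin n} (C : Finset ℕ)
    (hself : v < s + l → v.val ∈ C)
    (hnbr : ∀ b < s + l, cstarRel s l v b ∨ cstarRel s l b v → b ∈ C) :
    (cstarCore n s l ∩ closedNeighborFinset (Cstar n s l) v).card ≤ C.card := by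
  refine Finset.card_le_card_of_injOn Fin.val (fun w hw => ?_) Fin.val_injective.injOn
  simp only [SetLike.mem_coe, Finset.mem_inter, cstarCore, Finset.mem_filter, Finset.mem_univ,
    true_and, mem_closedNeighborFinset] at hw
  obtain ⟨hw, rfl | hadj⟩ := hw
  · exact hself hw
  · exact hnbr w hw (Cstar_adj.1 hadj).2

theorem card_cstarCore_inter_le_four {v : Fin n} (hv : v.val = 0) :
    (cstarCore n s l ∩ closedNeighborFinset (Cstar n s l) v).card ≤ 4 := by
  refine (card_cstarCore_inter_le {v.val, 1, s - 1, s} (fun _ => Finset.mem_insert_self _ _)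
    fun b hb h => ?_).trans Finset.card_le_four
  have hnbr : b = 1 ∨ b = s - 1 ∨ b = s := eq_of_cstarRel_of_eq_zero hv hb h
  exact Finset.mem_insert_of_mem (by simpa only [Finset.mem_insert, Finset.mem_singleton])

theorem card_cstarCore_inter_le_three {v : Fin n} (hv : v.val ≠ 0) :
    (cstarCore n s l ∩ closedNeighborFinset (Cstar n s l) v).card ≤ 3 := by
  rcases lt_or_ge v.val (s + l) with hcore | hpendant
  · let prev := if v.val = s then 0 else v.val - 1
    let next := if v.val + 1 = s then 0 else v.val + 1
    refine (card_cstarCore_inter_le {v.val, prev, next} (fun _ => Finset.mem_insert_self _ _)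
      fun b hb h => ?_).trans Finset.card_le_three
    have hnbr : b = prev ∨ b = next := eq_of_cstarRel_of_ne_zero hv hcore hb h
    exact Finset.mem_insert_of_mem (by simpa only [Finset.mem_insert, Finset.mem_singleton])
  · refine (card_cstarCore_inter_le {if l = 0 then 0 else s + l - 1}
      (fun hcore => absurd hcore hpendant.not_gt) fun b hb h => ?_).trans (by simp)
    exact Finset.mem_singleton.2 (eq_of_cstarRel_of_le hpendant hb h)

theorem add_le_three_mul_dominationNumber_Cstar_add_one (hn : s + l ≤ n) :
    s + l ≤ 3 * dominationNumber (Cstar n s l) + 1 := by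
  cases n with
  | zero => omega
  | succ n =>
    rw [← card_cstarCore hn]
    exact card_le_mul_dominationNumber_add 0 (card_cstarCore_inter_le_four rfl)
      fun v hv => card_cstarCore_inter_le_three (Fin.val_ne_zero_iff.2 hv)

theorem dominationNumber_Cstar_le_card {C : Finset ℕ} (hC : ∀ c ∈ C, c < n)
    (hdom : ∀ w < n, ∃ c ∈ C, c = w ∨ cstarRel s l c w ∨ cstarRel s l w c) :
    dominationNumber (Cstar n s l) ≤ C.card := by
  have hD : IsDominatingSet (Cstar n s l) (C.attachFin hC) := by
    intro v hv
    obtain ⟨c, hc, hcv⟩ := hdom v v.isLt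
    have hmem : (⟨c, hC c hc⟩ : Fin n) ∈ C.attachFin hC := (Finset.mem_attachFin hC).2 hc
    have hne : (⟨c, hC c hc⟩ : Fin n) ≠ v := ne_of_mem_of_not_mem hmem hv
    exact ⟨_, hmem, Cstar_adj.2 ⟨hne, hcv.resolve_left fun h => hne (Fin.ext h)⟩⟩
  simpa only [Finset.card_attachFin] using hD.dominationNumber_le_card

end Cstar

section Triangle

variable {n t w : ℕ}

/-- A dominating set of `C*_{3,t}`: the vertex `0`, which takes care of the triangle, and every
third vertex of the path `3, …, t + 2`, starting from its far end `t + 2`. -/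
def triangleCenters (t : ℕ) : Finset ℕ :=
  insert 0 ((Finset.range ((t + 2) / 3)).image fun i => t + 2 - 3 * i)

theorem card_triangleCenters_le (t : ℕ) : (triangleCenters t).card ≤ (t + 2) / 3 + 1 :=
  (Finset.card_insert_le _ _).trans <| Nat.succ_le_succ <|
    Finset.card_image_le.trans (Finset.card_range _).le

theorem zero_mem_triangleCenters (t : ℕ) : 0 ∈ triangleCenters t :=
  Finset.mem_insert_self _ _

theorem sub_three_mul_mem_triangleCenters {i : ℕ} (hi : i < (t + 2) / 3) :
    t + 2 - 3 * i ∈ triangleCenters t :=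
  Finset.mem_insert_of_mem (Finset.mem_image_of_mem _ (Finset.mem_range.2 hi))

theorem lt_of_mem_triangleCenters (hw : w ∈ triangleCenters t) : w < 3 + t := by
  simp only [triangleCenters, Finset.mem_insert, Finset.mem_image] at hw
  omega

theorem pathEnd_mem_triangleCenters (t : ℕ) :
    (if t = 0 then 0 else 3 + t - 1) ∈ triangleCenters t := by
  split_ifs with ht
  · exact zero_mem_triangleCenters t
  · convert sub_three_mul_mem_triangleCenters (t := t) (i := 0) (by omega) using 1
    omega

theorem cstarRel_three_zero (hw₀ : w ≠ 0) (hw : w ≤ 3) (hwt : w < 3 + t) : cstarRel 3 t 0 w := by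
  unfold cstarRel
  omega

theorem exists_mem_triangleCenters_eq_or_cstarRel (hw₃ : 3 < w) (hw : w < 3 + t) :
    ∃ c ∈ triangleCenters t, c = w ∨ cstarRel 3 t c w ∨ cstarRel 3 t w c := by
  -- `i` is the distance from `w` to the far end divided by three, rounded to the nearest integer.
  obtain ⟨i, hi⟩ : ∃ i, i = (t + 3 - w) / 3 := ⟨_, rfl⟩
  refine ⟨t + 2 - 3 * i, sub_three_mul_mem_triangleCenters (by omega), ?_⟩
  have hnear : t + 2 - 3 * i = w ∨ w = t + 2 - 3 * i + 1 ∨ t + 2 - 3 * i = w + 1 := by omega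
  rcases hnear with heq | hsucc | hpred
  · exact Or.inl heq
  · refine Or.inr (Or.inl ?_)
    rw [hsucc]
    exact cstarRel_path_succ (by omega) (by omega)
  · refine Or.inr (Or.inr ?_)
    rw [hpred]
    exact cstarRel_path_succ (by omega) (by omega)

theorem dominationNumber_Cstar_three_le_div_add_one (hn : 3 + t ≤ n) :
    dominationNumber (Cstar n 3 t) ≤ (t + 2) / 3 + 1 := by
  refine (dominationNumber_Cstar_le_card (C := triangleCenters t)
    (fun c hc => (lt_of_mem_triangleCenters hc).trans_le hn) fun w _ => ?_).trans
    (card_triangleCenters_le t)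
  rcases le_or_gt (3 + t) w with hpendant | hcore
  · exact ⟨_, pathEnd_mem_triangleCenters t, Or.inr (Or.inl (cstarRel_pendant hpendant))⟩
  rcases lt_or_ge 3 w with hpath | hnear
  · exact exists_mem_triangleCenters_eq_or_cstarRel hpath hcore
  refine ⟨0, zero_mem_triangleCenters t, ?_⟩
  rcases eq_or_ne w 0 with hzero | hne
  · exact Or.inl hzero.symm
  · exact Or.inr (Or.inl (cstarRel_three_zero hne hnear hcore))

end Triangle

theorem dominationNumber_Cstar_three_le_general {n s l t : ℕ} (hn : s + l ≤ n)
    (ht : t + 4 ≤ s + l) :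
    dominationNumber (Cstar n 3 t) ≤ dominationNumber (Cstar n s l) := by
  have hupper : dominationNumber (Cstar n 3 t) ≤ (t + 2) / 3 + 1 :=
    dominationNumber_Cstar_three_le_div_add_one (by omega)
  have hlower : s + l ≤ 3 * dominationNumber (Cstar n s l) + 1 :=
    add_le_three_mul_dominationNumber_Cstar_add_one hn
  omega

/-- For `k ≥ 2` and `t = l + k - 1`, with both graphs of order `n ≥ 2k + 1 + l`,
we have `γ(C*_{3,t}) ≤ γ(C*_{2k+1,l})`. -/
theorem dominationNumber_Cstar_three_le
    (n k l : ℕ) (hk : 2 ≤ k) (hn : 2 * k + 1 + l ≤ n) :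
    dominationNumber (Cstar n 3 (l + k - 1)) ≤ dominationNumber (Cstar n (2 * k + 1) l) :=
  dominationNumber_Cstar_three_le_general hn (by omega)
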